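/- arXiv:2202.08253 — 2 statements merged into one kernel-verified Lean document; each statement's English description precedes it below -/
import Mathlib

section
/- Let N ≥ 1 and let M = π Σ_{j=1}^{N} 2^{−j} X_j acting on (ℂ²)^{⊗N}, where X_j is the Pauli-X matrix on qubit j (identity on the other factors). Then the spectrum of M is exactly { π Σ_{j=1}^N s_j 2^{−j} : s ∈ {−1,+1}^N }, and the set of all pairwise differences of eigenvalues of M is exactly { 2πk/2^N : k ∈ ℤ, −(2^N−1) ≤ k ≤ 2^N−1 }. -/
/-!
The Hadamard matrix `H = [[1, 1], [1, -1]]` satisfies `X H = H Z` and `H² = 2`, so conjugation by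
`H^{⊗N}` diagonalises every `X_j` at once: `M H^{⊗N} = H^{⊗N} D`, where `D` is diagonal with entry
`π Σ_j (-1)^{b_j(ℓ)} 2^{-j}` at the basis index `ℓ` with bits `b_j(ℓ)` (`phaseGen_mul_hadamard`).
As the bits identify `{0, …, 2^N - 1}` with `{0,1}^N` (`qubitEquiv`), every sign pattern occurs
exactly once, which gives the spectrum. Since `ℓ = Σ_j b_j(ℓ) 2^{N-j}`, the entry at `ℓ`
equals `π (2^N - 1 - 2ℓ) / 2^N` (`phaseEigenvalue_eq`); the differences are therefore
`2π (ℓ' - ℓ) / 2^N`, and `ℓ' - ℓ` takes every integer value of absolute value below `2^N`.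
-/

open Matrix

/-- The `j`-th bit (0-indexed qubit `j`, corresponding to the paper's qubit `j+1`) of a
computational basis index `ℓ ∈ {0,…,2^N-1}`, via `ℓ = Σ_j b_j 2^{N-1-j}`. -/
def qubitBit (N : ℕ) (j : Fin N) (ℓ : Fin (2 ^ N)) : Fin 2 :=
  ⟨(ℓ : ℕ) / 2 ^ (N - 1 - (j : ℕ)) % 2, Nat.mod_lt _ two_pos⟩

/-- The `N`-fold Kronecker (tensor) product of single-qubit matrices, with qubit `j` the
`j`-th tensor factor. -/
def tensorProd (N : ℕ) (A : Fin N → Matrix (Fin 2) (Fin 2) ℂ) :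
    Matrix (Fin (2 ^ N)) (Fin (2 ^ N)) ℂ :=
  fun r c => ∏ j : Fin N, A j (qubitBit N j r) (qubitBit N j c)

/-- The Pauli-X matrix `[[0,1],[1,0]]`. -/
def pauliX : Matrix (Fin 2) (Fin 2) ℂ := !![0, 1; 1, 0]

/-- `X_j = I^{⊗(j-1)} ⊗ X ⊗ I^{⊗(N-j)}`, the Pauli-X on qubit `j` (identity elsewhere). -/
def pauliXOn (N : ℕ) (j : Fin N) : Matrix (Fin (2 ^ N)) (Fin (2 ^ N)) ℂ :=
  tensorProd N (fun j' => if j' = j then pauliX else 1)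

/-- The generator of the phase feature map, `M = π Σ_{j=1}^N 2^{-j} X_j`. -/
noncomputable def phaseGen (N : ℕ) : Matrix (Fin (2 ^ N)) (Fin (2 ^ N)) ℂ :=
  ((Real.pi : ℂ)) • ∑ j : Fin N, ((2 : ℂ) ^ ((j : ℕ) + 1))⁻¹ • pauliXOn N j

/-- The identification of basis indices with bit strings; its components are the `qubitBit`s.
The most significant bit belongs to qubit `0`, hence the reversal of the little-endian digits
given by `finFunctionFinEquiv`. -/
def qubitEquiv (N : ℕ) : Fin (2 ^ N) ≃ (Fin N → Fin 2) :=
  finFunctionFinEquiv.symm.trans (Equiv.arrowCongr Fin.revPerm (Equiv.refl _))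

lemma qubitEquiv_apply (N : ℕ) (ℓ : Fin (2 ^ N)) (j : Fin N) :
    qubitEquiv N ℓ j = qubitBit N j ℓ := by
  apply Fin.ext
  have h : N - (j.val + 1) = N - 1 - j.val := by omega
  simp [qubitEquiv, qubitBit, finFunctionFinEquiv, Equiv.ofRightInverseOfCardLE, Fin.val_rev, h]

lemma sum_qubitBit (N : ℕ) (ℓ : Fin (2 ^ N)) :
    ∑ j : Fin N, (qubitBit N j ℓ : ℕ) * 2 ^ (N - 1 - (j : ℕ)) = ℓ := by
  conv_rhs => rw [← finFunctionFinEquiv.apply_symm_apply ℓ, finFunctionFinEquiv_apply]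
  rw [← Equiv.sum_comp Fin.revPerm]
  refine Finset.sum_congr rfl fun j _ => ?_
  have h : N - 1 - (Fin.revPerm j : Fin N).val = j.val := by
    simp [Fin.val_rev]; omega
  rw [h, ← qubitEquiv_apply]
  simp [qubitEquiv]

lemma tensorProd_mul (N : ℕ) (A B : Fin N → Matrix (Fin 2) (Fin 2) ℂ) :
    tensorProd N A * tensorProd N B = tensorProd N (fun j => A j * B j) := by
  ext r c
  simp only [Matrix.mul_apply, tensorProd, ← qubitEquiv_apply, ← Finset.prod_mul_distrib]
  rw [Finset.prod_univ_sum, Fintype.piFinset_univ]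
  exact Equiv.sum_comp (qubitEquiv N)
    (fun f => ∏ j, A j (qubitEquiv N r j) (f j) * B j (f j) (qubitEquiv N c j))

lemma tensorProd_diagonal (N : ℕ) (d : Fin N → Fin 2 → ℂ) :
    tensorProd N (fun j => diagonal (d j)) =
      diagonal (fun ℓ => ∏ j, d j (qubitBit N j ℓ)) := by
  ext r c
  rcases eq_or_ne r c with rfl | h
  · simp [tensorProd]
  · rw [diagonal_apply_ne _ h]
    obtain ⟨j, hj⟩ := Function.ne_iff.mp ((qubitEquiv N).injective.ne h)
    rw [qubitEquiv_apply, qubitEquiv_apply] at hj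
    exact Finset.prod_eq_zero (Finset.mem_univ j) (diagonal_apply_ne _ hj)

/-- The unnormalised Hadamard matrix. -/
def hadamard2 : Matrix (Fin 2) (Fin 2) ℂ := !![1, 1; 1, -1]

/-- The sign `(-1)^b` of a bit `b`. -/
def bitSign (b : Fin 2) : ℝ := if b = 0 then 1 else -1

lemma pauliX_mul_hadamard2 :
    pauliX * hadamard2 = hadamard2 * diagonal (fun b => (bitSign b : ℂ)) := by
  ext i j
  fin_cases i <;> fin_cases j <;>
    simp [pauliX, hadamard2, bitSign, Matrix.mul_apply, Fin.sum_univ_two]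

lemma hadamard2_mul_self : hadamard2 * hadamard2 = diagonal (fun _ => 2) := by
  ext i j
  fin_cases i <;> fin_cases j <;>
    norm_num [hadamard2, Matrix.mul_apply, Fin.sum_univ_two]

lemma pauliXOn_mul_hadamard (N : ℕ) (j : Fin N) :
    pauliXOn N j * tensorProd N (fun _ => hadamard2) =
      tensorProd N (fun _ => hadamard2) *
        diagonal (fun ℓ => (bitSign (qubitBit N j ℓ) : ℂ)) := by
  have hd : diagonal (fun ℓ => (bitSign (qubitBit N j ℓ) : ℂ)) =
      tensorProd N (fun i => diagonal (fun b => if i = j then (bitSign b : ℂ) else 1)) := by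
    rw [tensorProd_diagonal]
    simp
  rw [hd, pauliXOn, tensorProd_mul, tensorProd_mul]
  congr 1
  funext i
  by_cases h : i = j
  · simp [h, pauliX_mul_hadamard2]
  · simp [h]

/-- The eigenvalue of `phaseGen N` on the column `ℓ` of the `N`-fold Hadamard matrix. -/
noncomputable def phaseEigenvalue (N : ℕ) (ℓ : Fin (2 ^ N)) : ℝ :=
  Real.pi * ∑ j : Fin N, bitSign (qubitBit N j ℓ) * ((2 : ℝ) ^ ((j : ℕ) + 1))⁻¹

lemma phaseGen_mul_hadamard (N : ℕ) :
    phaseGen N * tensorProd N (fun _ => hadamard2) =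
      tensorProd N (fun _ => hadamard2) * diagonal (fun ℓ => (phaseEigenvalue N ℓ : ℂ)) := by
  have hd : diagonal (fun ℓ => (phaseEigenvalue N ℓ : ℂ)) =
      (Real.pi : ℂ) • ∑ j : Fin N, ((2 : ℂ) ^ ((j : ℕ) + 1))⁻¹ •
        diagonal (fun ℓ => (bitSign (qubitBit N j ℓ) : ℂ)) := by
    ext r c
    rcases eq_or_ne r c with rfl | h
    · simp [phaseEigenvalue, Matrix.sum_apply, mul_comm]
    · simp [Matrix.sum_apply, h]
  rw [hd, phaseGen]
  simp only [Matrix.smul_mul, Matrix.mul_smul, Matrix.sum_mul, Matrix.mul_sum,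
    pauliXOn_mul_hadamard]

lemma isUnit_hadamard (N : ℕ) : IsUnit (tensorProd N (fun _ => hadamard2)) := by
  rw [Matrix.isUnit_iff_isUnit_det, isUnit_iff_ne_zero]
  intro h
  have h2 : (tensorProd N (fun _ => hadamard2) * tensorProd N (fun _ => hadamard2)).det = 0 := by
    rw [det_mul, h, zero_mul]
  rw [tensorProd_mul, hadamard2_mul_self, tensorProd_diagonal, det_diagonal] at h2
  simp at h2

lemma spectrum_phaseGen_eq_range (N : ℕ) :
    spectrum ℂ (phaseGen N) = Set.range (fun ℓ => (phaseEigenvalue N ℓ : ℂ)) := by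
  obtain ⟨u, hu⟩ := isUnit_hadamard N
  have h := phaseGen_mul_hadamard N
  rw [← hu] at h
  rw [(Units.eq_mul_inv_iff_mul_eq u).mpr h, spectrum.units_conjugate, spectrum_diagonal]

lemma phaseEigenvalue_eq (N : ℕ) (ℓ : Fin (2 ^ N)) :
    phaseEigenvalue N ℓ = Real.pi * ((2 ^ N - 1 - 2 * (ℓ : ℝ)) / 2 ^ N) := by
  have hsign : ∀ b : Fin 2, bitSign b = 1 - 2 * ((b : ℕ) : ℝ) := by
    intro b
    fin_cases b <;> norm_num [bitSign]
  have hgeom : ∑ j : Fin N, ((2 : ℝ) ^ ((j : ℕ) + 1))⁻¹ = (2 ^ N - 1) / 2 ^ N := by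
    rw [Fin.sum_univ_eq_sum_range (fun j => ((2 : ℝ) ^ (j + 1))⁻¹)]
    clear ℓ
    induction N with
    | zero => simp
    | succ n ih =>
      rw [Finset.sum_range_succ, ih]
      field_simp
      ring
  have hbits : ∑ j : Fin N, ((qubitBit N j ℓ : ℕ) : ℝ) * ((2 : ℝ) ^ ((j : ℕ) + 1))⁻¹ =
      (ℓ : ℝ) / 2 ^ N := by
    have h := congrArg (Nat.cast : ℕ → ℝ) (sum_qubitBit N ℓ)
    push_cast at h
    rw [← h, Finset.sum_div]
    refine Finset.sum_congr rfl fun j _ => ?_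
    have hp : (2 : ℝ) ^ N = 2 ^ (N - 1 - (j : ℕ)) * 2 ^ ((j : ℕ) + 1) := by
      rw [← pow_add]
      congr 1
      omega
    rw [hp]
    field_simp
  rw [phaseEigenvalue]
  congr 1
  calc ∑ j : Fin N, bitSign (qubitBit N j ℓ) * ((2 : ℝ) ^ ((j : ℕ) + 1))⁻¹
      = ∑ j : Fin N, ((2 : ℝ) ^ ((j : ℕ) + 1))⁻¹ -
          2 * ∑ j : Fin N, ((qubitBit N j ℓ : ℕ) : ℝ) * ((2 : ℝ) ^ ((j : ℕ) + 1))⁻¹ := by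
        rw [Finset.mul_sum, ← Finset.sum_sub_distrib]
        refine Finset.sum_congr rfl fun j _ => ?_
        rw [hsign]
        ring
    _ = _ := by
        rw [hgeom, hbits]
        ring

/-- **Spectral analysis of the phase feature map generator.** The spectrum of
`M = π Σ_j 2^{-j} X_j` is exactly `{π Σ_j s_j 2^{-j} : s ∈ {-1,+1}^N}`, and the set of
all pairwise differences of its eigenvalues is exactly
`{2πk/2^N : k ∈ ℤ, -(2^N-1) ≤ k ≤ 2^N-1}` — the accessible model frequencies are all
integer multiples of the base frequency `2π/2^N` up to `2^N-1`. -/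
theorem phaseGen_spectrum (N : ℕ) (hN : 1 ≤ N) :
    spectrum ℂ (phaseGen N) =
      {z : ℂ | ∃ s : Fin N → ℝ, (∀ j, s j = 1 ∨ s j = -1) ∧
        z = ((Real.pi * ∑ j : Fin N, s j * ((2 : ℝ) ^ ((j : ℕ) + 1))⁻¹ : ℝ) : ℂ)} ∧
    {d : ℂ | ∃ lam ∈ spectrum ℂ (phaseGen N), ∃ mu ∈ spectrum ℂ (phaseGen N), d = lam - mu}
      = {d : ℂ | ∃ k : ℤ, -(2 ^ N - 1) ≤ k ∧ k ≤ 2 ^ N - 1 ∧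
          d = ((2 * Real.pi * (k : ℝ) / 2 ^ N : ℝ) : ℂ)} := by
  refine ⟨?_, ?_⟩
  · rw [spectrum_phaseGen_eq_range]
    ext z
    constructor
    · rintro ⟨ℓ, rfl⟩
      refine ⟨fun j => bitSign (qubitBit N j ℓ), fun j => ?_, rfl⟩
      dsimp only [bitSign]
      split_ifs <;> simp
    · rintro ⟨s, hs, rfl⟩
      refine ⟨(qubitEquiv N).symm (fun j => if s j = 1 then 0 else 1), ?_⟩
      have hb : ∀ j, bitSign (qubitBit N j
          ((qubitEquiv N).symm (fun j => if s j = 1 then 0 else 1))) = s j := by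
        intro j
        rw [← qubitEquiv_apply, Equiv.apply_symm_apply]
        rcases hs j with h | h <;> norm_num [h, bitSign]
      simp only [phaseEigenvalue, hb]
  · rw [spectrum_phaseGen_eq_range]
    have hdiff : ∀ a b : Fin (2 ^ N), (phaseEigenvalue N a : ℂ) - phaseEigenvalue N b =
        ((2 * Real.pi * (((b : ℤ) - (a : ℤ) : ℤ) : ℝ) / 2 ^ N : ℝ) : ℂ) := by
      intro a b
      rw [← Complex.ofReal_sub, phaseEigenvalue_eq, phaseEigenvalue_eq]
      congr 1
      push_cast
      ring
    ext d
    constructor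
    · rintro ⟨_, ⟨a, rfl⟩, _, ⟨b, rfl⟩, rfl⟩
      have ha : ((a : ℕ) : ℤ) < 2 ^ N := by exact_mod_cast a.isLt
      have hb : ((b : ℕ) : ℤ) < 2 ^ N := by exact_mod_cast b.isLt
      exact ⟨(b : ℤ) - (a : ℤ), by omega, by omega, hdiff a b⟩
    · rintro ⟨k, hk1, hk2, rfl⟩
      -- `k` is the difference of the indices `max k 0` and `max (-k) 0`, both below `2 ^ N`.
      have ha : (-k).toNat < 2 ^ N := by
        zify
        have : (0 : ℤ) < 2 ^ N := by positivity
        omega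
      have hb : k.toNat < 2 ^ N := by
        zify
        have : (0 : ℤ) < 2 ^ N := by positivity
        omega
      refine ⟨_, ⟨⟨(-k).toNat, ha⟩, rfl⟩, _, ⟨⟨k.toNat, hb⟩, rfl⟩, ?_⟩
      have hk : (k.toNat : ℤ) - ((-k).toNat : ℤ) = k := by omega
      rw [hdiff]
      simp only [hk]
end

section
/- Let N ≥ 1, let M = π Σ_{j=1}^{N} 2^{−j} X_j on (ℂ²)^{⊗N}, and let E = |0…0⟩⟨0…0| = (|0⟩⟨0|)^{⊗N} be the global cost operator. Then the differential cost operator admits the explicit decomposition i·M·E − i·E·M = π Σ_{j=1}^{N} 2^{−j} · ( |0⟩⟨0|^{⊗(j−1)} ⊗ Y ⊗ |0⟩⟨0|^{⊗(N−j)} ), where Y = [[0,−i],[i,0]] is the Pauli-Y matrix; i.e., δ₁Ĉ is a sum of N terms, each a Pauli-Y on one qubit tensored with the zero projector on the remaining N−1 qubits. -/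
/-!
The map sending a basis index to its bit string is a bijection, so the entries of a product of
two tensor products factor and `tensorProd` satisfies the mixed-product property
(`tensorProd_mul`). Hence `X_j E` and `E X_j` are tensor products which have `|0⟩⟨0|` on every
qubit except `j`, where they have `X |0⟩⟨0|` and `|0⟩⟨0| X` respectively. By linearity in slot
`j`, the combination `i X_j E - i E X_j` has `i (X |0⟩⟨0| - |0⟩⟨0| X) = Y` in that slot, and the
claim follows by summing over `j` with the weights `π 2^{-j}`.
-/

open Matrix

/-- The Pauli-Y matrix `[[0,-i],[i,0]]`. -/
def pauliY : Matrix (Fin 2) (Fin 2) ℂ := !![0, -Complex.I; Complex.I, 0]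

/-- The single-qubit zero projector `|0⟩⟨0| = [[1,0],[0,0]]`. -/
def proj0 : Matrix (Fin 2) (Fin 2) ℂ := !![1, 0; 0, 0]

/-- The global cost operator `E = |0…0⟩⟨0…0| = (|0⟩⟨0|)^{⊗N}`. -/
def globalCost (N : ℕ) : Matrix (Fin (2 ^ N)) (Fin (2 ^ N)) ℂ :=
  tensorProd N (fun _ => proj0)

/-- Reading off all bits identifies basis indices with bit strings. -/
lemma qubitBit_bijective (N : ℕ) :
    Function.Bijective (fun (ℓ : Fin (2 ^ N)) (j : Fin N) => qubitBit N j ℓ) := by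
  -- Both sides have `2 ^ N` elements, so injectivity suffices.
  rw [Fintype.bijective_iff_injective_and_card]
  refine ⟨fun a b h => Fin.ext (Nat.eq_of_testBit_eq fun i => ?_), by simp⟩
  by_cases hi : i < N
  · -- Qubit `N - 1 - i` carries the binary digit of weight `2 ^ i`.
    have h1 := congrArg Fin.val (congrFun h ⟨N - 1 - i, by omega⟩)
    have h2 : N - 1 - (N - 1 - i) = i := by omega
    simp only [qubitBit, h2] at h1
    simp [Nat.testBit_eq_decide_div_mod_eq, h1]
  · have hp : 2 ^ N ≤ 2 ^ i := Nat.pow_le_pow_right two_pos (by omega)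
    rw [Nat.testBit_lt_two_pow (a.2.trans_le hp), Nat.testBit_lt_two_pow (b.2.trans_le hp)]

/-- On one qubit, `i (X |0⟩⟨0| - |0⟩⟨0| X) = Y`. -/
lemma pauliX_proj0_commutator :
    Complex.I • (pauliX * proj0) - Complex.I • (proj0 * pauliX) = pauliY := by
  ext a b
  fin_cases a <;> fin_cases b <;> simp [pauliX, proj0, pauliY]

/-- Linearity of the tensor product in slot `j`, for the combination `z • A - z • B`. -/
lemma tensorProd_slot_smul_sub (N : ℕ) (j : Fin N) (z : ℂ)
    (A B P : Matrix (Fin 2) (Fin 2) ℂ) :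
    z • tensorProd N (fun j' => if j' = j then A else P) -
      z • tensorProd N (fun j' => if j' = j then B else P) =
    tensorProd N (fun j' => if j' = j then z • A - z • B else P) := by
  ext r c
  have key : ∀ C : Matrix (Fin 2) (Fin 2) ℂ,
      tensorProd N (fun j' => if j' = j then C else P) r c =
        C (qubitBit N j r) (qubitBit N j c) *
          ∏ j' ∈ Finset.univ.erase j, P (qubitBit N j' r) (qubitBit N j' c) := by
    intro C
    rw [tensorProd, ← Finset.mul_prod_erase _ _ (Finset.mem_univ j), if_pos rfl]
    congr 1
    exact Finset.prod_congr rfl fun k hk => by rw [if_neg (Finset.ne_of_mem_erase hk)]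
  simp only [Matrix.sub_apply, Matrix.smul_apply, key, smul_eq_mul]
  ring

/-- The contribution of a single generator `X_j` to the differential cost operator. -/
lemma pauliXOn_globalCost_commutator (N : ℕ) (j : Fin N) :
    Complex.I • (pauliXOn N j * globalCost N) - Complex.I • (globalCost N * pauliXOn N j) =
      tensorProd N (fun j' => if j' = j then pauliY else proj0) := by
  simp only [pauliXOn, globalCost, tensorProd_mul, ite_mul, mul_ite, one_mul, mul_one]
  rw [tensorProd_slot_smul_sub, pauliX_proj0_commutator]

/-- **Eq. (15) of the paper.** The differential cost operator for the global cost admits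
the explicit decomposition
`iME - iEM = π Σ_{j=1}^N 2^{-j} (|0⟩⟨0|^{⊗(j-1)} ⊗ Y ⊗ |0⟩⟨0|^{⊗(N-j)})`:
a sum of `N` terms, each a Pauli-Y on one qubit tensored with the zero projector on the
remaining `N-1` qubits. -/
theorem diff_cost_decomposition (N : ℕ) (hN : 1 ≤ N) :
    Complex.I • (phaseGen N * globalCost N) - Complex.I • (globalCost N * phaseGen N) =
      ((Real.pi : ℂ)) • ∑ j : Fin N, ((2 : ℂ) ^ ((j : ℕ) + 1))⁻¹ •
        tensorProd N (fun j' => if j' = j then pauliY else proj0) := by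
  simp only [phaseGen, ← pauliXOn_globalCost_commutator, Matrix.smul_mul, Matrix.mul_smul,
    Finset.sum_mul, Finset.mul_sum, smul_sub, Finset.sum_sub_distrib, Finset.smul_sum,
    smul_comm Complex.I]
end
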